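/- arXiv:2404.12907 — 3 statements merged into one kernel-verified Lean document; each statement's English description precedes it below -/
import Mathlib

section
/- Let T be a tournament with prefix P, and let T' = T[V(T) \ P] be the tournament T with its prefix removed. Then T' contains no vertex of in-degree 0 (in T'). -/
variable {V : Type*}

def IsTournament (E : V → V → Prop) : Prop :=
  (∀ v : V, ¬ E v v) ∧ ∀ u v : V, u ≠ v → (E u v ↔ ¬ E v u)

def Acyclic (E : V → V → Prop) : Prop :=
  ∀ v : V, ¬ Relation.TransGen E v v

noncomputable def indeg [Fintype V] (E : V → V → Prop) (v : V) : ℕ :=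
  Set.ncard {u : V | E u v}

noncomputable def indegOn [Fintype V] (E : V → V → Prop) (X : Set V) (v : V) : ℕ :=
  Set.ncard {u : V | u ∈ X ∧ E u v}

def IsTriangle (E : V → V → Prop) (t : V × V × V) : Prop :=
  E t.1 t.2.1 ∧ E t.2.1 t.2.2 ∧ E t.2.2 t.1

def triArcs (t : V × V × V) : Set (V × V) :=
  {(t.1, t.2.1), (t.2.1, t.2.2), (t.2.2, t.1)}

def IsADTFamily (E : V → V → Prop) (F : Finset (V × V × V)) : Prop :=
  (∀ t ∈ F, IsTriangle E t) ∧
    ∀ t ∈ F, ∀ s ∈ F, t ≠ s → Disjoint (triArcs t) (triArcs s)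

noncomputable def ADT (E : V → V → Prop) : ℕ :=
  sSup {n : ℕ | ∃ F : Finset (V × V × V), IsADTFamily E F ∧ F.card = n}

def IsFAS (E : V → V → Prop) (S : Finset (V × V)) : Prop :=
  Acyclic fun u v => E u v ∧ (u, v) ∉ S

noncomputable def FAST (E : V → V → Prop) : ℕ :=
  sInf {n : ℕ | ∃ S : Finset (V × V), IsFAS E S ∧ S.card = n}

def IsFVS (E : V → V → Prop) (F : Finset V) : Prop :=
  Acyclic fun a b => E a b ∧ a ∉ F ∧ b ∉ F

noncomputable def FVST [Fintype V] (E : V → V → Prop) : ℕ :=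
  sInf {n : ℕ | ∃ F : Finset V, IsFVS E F ∧ F.card = n}

noncomputable def maxdb [Fintype V] (E : V → V → Prop) : ℕ :=
  (Finset.range (Fintype.card V)).sup fun d => Set.ncard {v : V | indeg E v = d}

open Classical in
noncomputable def prefLen [Fintype V] (E : V → V → Prop) : ℕ :=
  if ∀ d < Fintype.card V, Set.ncard {v : V | indeg E v = d} = 1 then Fintype.card V
  else sInf {d : ℕ | d < Fintype.card V ∧ Set.ncard {v : V | indeg E v = d} ≠ 1}

noncomputable def prefSet [Fintype V] (E : V → V → Prop) : Set V :=
  {v : V | indeg E v < prefLen E}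

noncomputable def minIndeg [Fintype V] (E : V → V → Prop) : ℕ :=
  sInf {k : ℕ | ∃ v : V, indeg E v = k}

noncomputable def minIndegOn [Fintype V] (E : V → V → Prop) (X : Set V) : ℕ :=
  sInf {k : ℕ | ∃ v ∈ X, indegOn E X v = k}

def emptyBuckets [Fintype V] (E : V → V → Prop) : Set ℕ :=
  {d : ℕ | d < Fintype.card V ∧ {v : V | indeg E v = d} = ∅}

def backArcs [Fintype V] (E : V → V → Prop) : Set (V × V) :=
  {p : V × V | E p.1 p.2 ∧ indeg E p.2 ≤ indeg E p.1}

def reverseArc (E : V → V → Prop) (u v : V) : V → V → Prop :=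
  fun a b =>
    (¬ ((a, b) = (u, v) ∨ (a, b) = (v, u)) ∧ E a b) ∨
      ((a, b) = (u, v) ∧ E v u) ∨ ((a, b) = (v, u) ∧ E u v)

def affected [Fintype V] (E : V → V → Prop) (u v : V) : Set V :=
  {w : V | indeg E w + 1 = indeg E u ∨ indeg E w = indeg E u ∨ indeg E w = indeg E u + 1 ∨
      indeg E w + 1 = indeg E v ∨ indeg E w = indeg E v ∨ indeg E w = indeg E v + 1}

def kLong [Fintype V] (E : V → V → Prop) (k : ℕ) (p : V × V) : Prop :=
  (k : ℤ) ≤ |(indeg E p.1 : ℤ) - (indeg E p.2 : ℤ)|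

def longAdj [Fintype V] (E : V → V → Prop) (k : ℕ) (a b : V) : Prop :=
  ((a, b) ∈ backArcs E ∧ kLong E k (a, b)) ∨ ((b, a) ∈ backArcs E ∧ kLong E k (b, a))

def heavySet [Fintype V] (E : V → V → Prop) (k : ℕ) : Set V :=
  {v : V | k < Set.ncard {u : V | longAdj E k u v}}

/-!
Write `p` for the prefix length. Suppose `v` lies outside the prefix and all its in-neighbours lie
inside. The prefix has `p` vertices, so `v` has in-degree at most `p`, hence exactly `p`. By
minimality of `p` the bucket of in-degree `p` is not `{v}`, so it contains some `w ≠ v`.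

As long as the buckets below `indeg x` are singletons, the in-neighbours of `x` are exactly the
vertices of smaller in-degree: by induction each of those has no arc from `x`, so it has an arc to
`x`, and there are already `indeg x` of them. Applied to `w`, this shows that `v` is not an
in-neighbour of `w`, so `w` is an in-neighbour of `v` outside the prefix, a contradiction.
-/

theorem ncard_preimage_eq_of_ncard_fiber_eq_one {α β : Type*} {f : α → β} {s : Set β}
    (h : ∀ b ∈ s, {a | f a = b}.ncard = 1) : (f ⁻¹' s).ncard = s.ncard := by
  refine Set.BijOn.ncard_eq (f := f) ⟨fun _ ha => ha, ?_, ?_⟩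
  · intro a ha a' _ haa'
    obtain ⟨c, hc⟩ := Set.ncard_eq_one.1 (h (f a) ha)
    exact (hc.subset rfl : a = c).trans (hc.subset haa'.symm : a' = c).symm
  · intro b hb
    obtain ⟨a, rfl : f a = b⟩ :=
      Set.nonempty_of_ncard_ne_zero ((h b hb).trans_ne one_ne_zero)
    exact ⟨a, hb, rfl⟩

section Indegree

variable [Fintype V] {E : V → V → Prop}

theorem ncard_setOfPred_indeg_lt {k : ℕ} (h : ∀ d < k, {v | indeg E v = d}.ncard = 1) :
    {v | indeg E v < k}.ncard = k :=
  (ncard_preimage_eq_of_ncard_fiber_eq_one (f := indeg E) (s := Set.Iio k) h).trans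
    (Set.ncard_Iio_nat k)

theorem inNeighbors_eq_setOfPred_indeg_lt [Std.Trichotomous E] {x : V}
    (h : ∀ d < indeg E x, {v | indeg E v = d}.ncard = 1) :
    {u | E u x} = {u | indeg E u < indeg E x} := by
  induction hd : indeg E x using Nat.strong_induction_on generalizing x with
  | _ d ih =>
    subst hd
    have lower_subset : {u | indeg E u < indeg E x} ⊆ {u | E u x} := by
      intro u (hu : indeg E u < indeg E x)
      have hxu : ¬ E x u := fun hE =>
        hu.not_gt ((ih _ hu (fun d hd => h d (hd.trans hu)) rfl).subset hE)
      by_contra hux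
      exact hu.ne (congrArg (indeg E) (Std.Trichotomous.trichotomous u x hux hxu))
    exact (Set.eq_of_subset_of_ncard_le lower_subset (ncard_setOfPred_indeg_lt h).ge).symm

theorem adj_of_indeg_le [Std.Trichotomous E] {x y : V}
    (h : ∀ d < indeg E x, {v | indeg E v = d}.ncard = 1) (hxy : indeg E x ≤ indeg E y)
    (hne : x ≠ y) : E x y := by
  have hyx : ¬ E y x := fun hE => hxy.not_gt ((inNeighbors_eq_setOfPred_indeg_lt h).subset hE)
  by_contra hE
  exact hne (Std.Trichotomous.trichotomous x y hE hyx)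

theorem isLeast_prefLen (E : V → V → Prop) :
    IsLeast {d | {v | indeg E v = d}.ncard ≠ 1} (prefLen E) := by
  unfold prefLen
  split_ifs with h
  -- A singleton bucket `card V` on top of the `card V` lower ones would need `card V + 1` vertices.
  · refine ⟨fun hcard => ?_, fun d hd => not_lt.1 fun hlt => hd (h d hlt)⟩
    have hcount : {v | indeg E v < Fintype.card V + 1}.ncard = Fintype.card V + 1 :=
      ncard_setOfPred_indeg_lt fun d hd =>
        (Nat.lt_succ_iff_lt_or_eq.1 hd).elim (h d) (fun hd => hd ▸ hcard)
    have hle := Set.ncard_le_card {v | indeg E v < Fintype.card V + 1}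
    rw [hcount, Nat.card_eq_fintype_card] at hle
    exact Nat.not_succ_le_self _ hle
  · push Not at h
    obtain ⟨hlt, hne⟩ := Nat.sInf_mem h
    exact ⟨hne, fun d hd =>
      (lt_or_ge d (Fintype.card V)).elim (fun hd' => Nat.sInf_le ⟨hd', hd⟩) hlt.le.trans⟩

theorem ncard_setOfPred_indeg_eq_of_lt_prefLen :
    ∀ d < prefLen E, {v | indeg E v = d}.ncard = 1 :=
  fun _ hd => by_contra fun hne => hd.not_ge ((isLeast_prefLen E).2 hne)

theorem ncard_prefSet (E : V → V → Prop) : (prefSet E).ncard = prefLen E :=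
  ncard_setOfPred_indeg_lt ncard_setOfPred_indeg_eq_of_lt_prefLen

theorem indegOn_eq_zero_iff {X : Set V} {v : V} : indegOn E X v = 0 ↔ ∀ u ∈ X, ¬ E u v := by
  rw [indegOn, Set.ncard_eq_zero, Set.eq_empty_iff_forall_notMem]
  simp only [Set.mem_ofPred_eq, not_and]

theorem exists_ne_indeg_eq_prefLen {v : V} (hv : indeg E v = prefLen E) :
    ∃ w ≠ v, indeg E w = prefLen E := by
  by_contra! h
  refine (isLeast_prefLen E).1 (Set.ncard_eq_one.2 ⟨v, Set.ext fun w => ⟨?_, ?_⟩⟩)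
  · exact fun hw => by_contra fun hne => h w hne hw
  · rintro rfl
    exact hv

end Indegree

-- Trichotomy of `E` says that the digraph is semicomplete: 2-cycles (and loops) are allowed.
theorem stmt5_general [Fintype V] (E : V → V → Prop) [Std.Trichotomous E] :
    ∀ v : V, v ∉ prefSet E → indegOn E (prefSet E)ᶜ v ≠ 0 := by
  intro v hv hzero
  have not_adj := indegOn_eq_zero_iff.1 hzero
  have inNeighbors_subset : {u | E u v} ⊆ prefSet E :=
    fun u huv => by_contra fun hu => not_adj u hu huv
  have hle : indeg E v ≤ prefLen E :=
    (Set.ncard_le_ncard inNeighbors_subset).trans (ncard_prefSet E).le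
  have hv_eq : indeg E v = prefLen E := hle.antisymm (not_lt.1 hv)
  obtain ⟨w, hne, hw⟩ := exists_ne_indeg_eq_prefLen hv_eq
  have hwv : E w v :=
    adj_of_indeg_le (hw ▸ ncard_setOfPred_indeg_eq_of_lt_prefLen) (hw.trans hv_eq.symm).le hne
  exact not_adj w hw.not_lt hwv

theorem IsTournament.trichotomous {E : V → V → Prop} (hT : IsTournament E) :
    Std.Trichotomous E :=
  ⟨fun u v huv hvu => by_contra fun hne => huv ((hT.2 u v hne).2 hvu)⟩

/-- In the tournament obtained by removing the prefix, no vertex has in-degree 0. -/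
theorem stmt5 [Fintype V] (E : V → V → Prop) (hT : IsTournament E) :
    ∀ v : V, v ∉ prefSet E → indegOn E (prefSet E)ᶜ v ≠ 0 := by
  have := hT.trichotomous
  exact stmt5_general E
end

section
/- For every tournament T, the maximum size of a degree bucket satisfies maxdb(T) ≤ 8(√(ADT(T) + 1) + 1), where maxdb(T) = max over d of |{v ∈ V(T) : d_T(v) = d}|. -/
variable {V : Type*}

/-!
The pairs `A` on the triangles of a maximum arc-disjoint family meet every directed triangle, and
`#A ≤ 3 * ADT E`. Let `B` be a set of `m` vertices of equal in-degree. For an arc `u → v` in `B`,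
comparing in-neighbourhoods shows that `uv` lies in more directed triangles than there are paths
`u → w → v`, and summing over the arcs in `B` gives at least `(m ^ 3 - m) / 8` by convexity of
`i ↦ C(i + 1, 2)`.

Conversely, if `uv ∉ A`, each directed triangle on `uv` uses a pair of `A` that leaves `v` or
enters `u`; if `uv ∈ A`, charge its paths `u → w → v` in `B`, plus one, to `uv` itself. A pair
`xy ∈ A` is then charged at most `m - 1` times through the arcs out of `y`. It is charged at most
`m - 1` times through the arcs into `x` and by itself, because the in-neighbours of `x`, the
midpoints of `xy` and `y` are distinct vertices of `B \ {x}`. Hence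
`m ^ 3 - m ≤ 16 * (m - 1) * #A`, so `m ^ 2 ≤ 48 * ADT E + 1`.
-/

section

open Finset

variable {E : V → V → Prop} {A : Finset (V × V)} {B : Finset V} {F : Finset (V × V × V)} {u v : V}

theorem IsTournament.ne (hT : IsTournament E) (huv : E u v) : u ≠ v := by
  rintro rfl
  exact hT.1 u huv

theorem IsTournament.asymm (hT : IsTournament E) (huv : E u v) : ¬ E v u :=
  (hT.2 u v (hT.ne huv)).1 huv

theorem IsTournament.not_arc_iff (hT : IsTournament E) (hne : u ≠ v) : ¬ E u v ↔ E v u :=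
  (hT.2 v u hne.symm).symm

/-- The arcs with both ends in `B`, as ordered pairs (tail, head); the counts run over these. -/
def arcsIn (E : V → V → Prop) [DecidableRel E] (B : Finset V) : Finset (V × V) :=
  {p ∈ B ×ˢ B | E p.1 p.2}

/-- The inner vertices, taken from `B`, of the paths of length two from `u` to `v`. If `u → v` is
an arc, midpoints from `u` to `v` complete it to transitive triangles, and midpoints from `v` to
`u` complete it to directed triangles. -/
def midpoints (E : V → V → Prop) [DecidableRel E] (B : Finset V) (u v : V) : Finset V :=
  {w ∈ B | E u w ∧ E w v}

theorem mem_arcsIn [DecidableRel E] {p : V × V} :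
    p ∈ arcsIn E B ↔ (p.1 ∈ B ∧ p.2 ∈ B) ∧ E p.1 p.2 := by
  simp only [arcsIn, mem_filter, mem_product]

theorem sum_arcsIn [DecidableRel E] (f : V → V → ℕ) :
    ∑ p ∈ arcsIn E B, f p.1 p.2 = ∑ v ∈ B, ∑ u ∈ B with E u v, f u v := by
  simp only [arcsIn, sum_filter, sum_product_right]

theorem IsTournament.two_mul_card_arcsIn_add_card [DecidableRel E]
    (hT : IsTournament E) (B : Finset V) : 2 * #(arcsIn E B) + #B = #B ^ 2 := by
  classical
  have hforward : {p ∈ B.offDiag | E p.1 p.2} = arcsIn E B := by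
    ext ⟨u, v⟩
    have hne : E u v → u ≠ v := hT.ne
    simp only [mem_filter, mem_offDiag, mem_arcsIn]
    tauto
  have hbackward : {p ∈ B.offDiag | ¬ E p.1 p.2} = (arcsIn E B).map (Equiv.prodComm V V) := by
    ext ⟨u, v⟩
    have hne : E v u → u ≠ v := fun hvu => (hT.ne hvu).symm
    have hflip : u ≠ v → (¬ E u v ↔ E v u) := hT.not_arc_iff
    simp only [mem_filter, mem_offDiag, mem_map_equiv, mem_arcsIn, Equiv.prodComm_symm,
      Equiv.prodComm_apply, Prod.swap_prod_mk]
    tauto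
  have hsplit := card_filter_add_card_filter_not (s := B.offDiag) (fun p => E p.1 p.2)
  rw [hforward, hbackward, card_map, offDiag_card, ← sq] at hsplit
  have := Nat.le_self_pow two_ne_zero #B
  omega

theorem sum_card_midpoints_eq_card_arcsIn [DecidableRel E] (v : V) :
    ∑ u ∈ B with E u v, #(midpoints E B u v) = #(arcsIn E {u ∈ B | E u v}) := by
  simp only [midpoints, arcsIn, card_filter, sum_product, sum_filter, ← ite_and, and_comm]

theorem IsTournament.card_pow_three_le_sum_midpoints [DecidableRel E] (hT : IsTournament E)
    (B : Finset V) :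
    #B ^ 3 ≤ 8 * ∑ p ∈ arcsIn E B, (#(midpoints E B p.1 p.2) + 1) + #B := by
  rw [sum_arcsIn fun u v => #(midpoints E B u v) + 1]
  -- Tangent line to `i ↦ 4 * i ^ 2 + 4 * i` at the average in-degree `(#B - 1) / 2`.
  have hlocal (v : V) : (4 * #{u ∈ B | E u v} * #B - (#B - 1) ^ 2 : ℤ) ≤
      8 * ∑ u ∈ B with E u v, (#(midpoints E B u v) + 1) := by
    have harcs := hT.two_mul_card_arcsIn_add_card {u ∈ B | E u v}
    rw [← sum_card_midpoints_eq_card_arcsIn] at harcs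
    rw [sum_add_distrib, sum_const, smul_eq_mul, mul_one]
    zify at harcs ⊢
    nlinarith [sq_nonneg (2 * #{u ∈ B | E u v} - (#B - 1) : ℤ)]
  have hindeg : 2 * ∑ v ∈ B, #{u ∈ B | E u v} + #B = #B ^ 2 := by
    rw [← hT.two_mul_card_arcsIn_add_card B, card_eq_sum_ones (arcsIn E B), sum_arcsIn fun _ _ => 1]
    simp only [card_eq_sum_ones]
  have hsum := sum_le_sum fun v (_ : v ∈ B) => hlocal v
  simp only [sum_sub_distrib, ← sum_mul, ← mul_sum, sum_const, nsmul_eq_mul] at hsum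
  zify at hsum hindeg ⊢
  linear_combination hsum - 2 * #B * hindeg

theorem card_filter_fst_arcsIn [DecidableRel E] [DecidableEq V] (u : V) :
    #{p ∈ arcsIn E B | u = p.1} = if u ∈ B then #{v ∈ B | E u v} else 0 := by
  simp only [arcsIn, filter_filter, and_comm (b := u = _), card_filter, sum_product, ite_and,
    sum_ite_irrel, sum_const_zero, sum_ite_eq]

theorem card_filter_snd_arcsIn [DecidableRel E] [DecidableEq V] (v : V) :
    #{p ∈ arcsIn E B | v = p.2} = if v ∈ B then #{u ∈ B | E u v} else 0 := by
  simp only [arcsIn, filter_filter, and_comm (b := v = _), card_filter, sum_product_right, ite_and,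
    sum_ite_irrel, sum_const_zero, sum_ite_eq]

theorem card_filter_fst_arcsIn_le [DecidableRel E] [DecidableEq V] (hE : ∀ v, ¬ E v v) (u : V) :
    #{p ∈ arcsIn E B | u = p.1} ≤ #B - 1 := by
  rw [card_filter_fst_arcsIn]
  split_ifs with hu
  · exact Nat.le_sub_one_of_lt (card_lt_card (filter_ssubset.2 ⟨u, hu, hE u⟩))
  · exact Nat.zero_le _

theorem card_filter_snd_arcsIn_le [DecidableRel E] [DecidableEq V] (hE : ∀ v, ¬ E v v) (v : V) :
    #{p ∈ arcsIn E B | v = p.2} ≤ #B - 1 := by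
  rw [card_filter_snd_arcsIn]
  split_ifs with hv
  · exact Nat.le_sub_one_of_lt (card_lt_card (filter_ssubset.2 ⟨v, hv, hE v⟩))
  · exact Nat.zero_le _

theorem IsTournament.card_inNbrs_add_card_midpoints_succ_le [DecidableRel E] (hT : IsTournament E)
    (hu : u ∈ B) (hv : v ∈ B) (huv : E u v) :
    #{w ∈ B | E w u} + (#(midpoints E B u v) + 1) ≤ #B - 1 := by
  classical
  have hdisj : Disjoint {w ∈ B | E w u} (midpoints E B u v) :=
    disjoint_filter.2 fun w _ hwu h => hT.asymm h.1 hwu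
  have hvnot : v ∉ ({w ∈ B | E w u} : Finset V) ∪ midpoints E B u v := by
    simp [midpoints, hT.asymm huv, hT.1]
  rw [← add_assoc, ← card_union_of_disjoint hdisj, ← card_insert_of_notMem hvnot,
    ← card_erase_of_mem hu]
  refine card_le_card fun w hw => ?_
  simp only [midpoints, mem_insert, mem_union, mem_filter] at hw
  rcases hw with rfl | ⟨hwB, hwu⟩ | ⟨hwB, huw, -⟩
  · exact mem_erase.2 ⟨(hT.ne huv).symm, hv⟩
  · exact mem_erase.2 ⟨hT.ne hwu, hwB⟩
  · exact mem_erase.2 ⟨(hT.ne huw).symm, hwB⟩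

theorem IsTournament.card_filter_snd_arcsIn_add_le [DecidableRel E] [DecidableEq V]
    (hT : IsTournament E) (e : V × V) :
    #{p ∈ arcsIn E B | e.1 = p.2} +
      (if e ∈ arcsIn E B then #(midpoints E B e.1 e.2) + 1 else 0) ≤ #B - 1 := by
  split_ifs with he
  · obtain ⟨⟨he₁, he₂⟩, hE⟩ := mem_arcsIn.1 he
    rw [card_filter_snd_arcsIn, if_pos he₁]
    exact hT.card_inNbrs_add_card_midpoints_succ_le he₁ he₂ hE
  · exact card_filter_snd_arcsIn_le hT.1 e.1

/-- A set of pairs containing an arc of every directed triangle. The upper bound on the size of a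
degree bucket is counted against such a set; members of `A` need not be arcs. -/
def IsTriangleTransversal (E : V → V → Prop) (A : Finset (V × V)) : Prop :=
  ∀ t, IsTriangle E t → ¬ Disjoint (triArcs t) (A : Set (V × V))

theorem IsTriangleTransversal.card_midpoints_le [DecidableRel E] [DecidableEq V]
    (hA : IsTriangleTransversal E A) (huv : E u v) (huvA : (u, v) ∉ A) :
    #(midpoints E B v u) ≤ #{e ∈ A | e.1 = v} + #{e ∈ A | e.2 = u} := by
  have hcover : midpoints E B v u ⊆
      {e ∈ A | e.1 = v}.image Prod.snd ∪ {e ∈ A | e.2 = u}.image Prod.fst := by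
    intro w hw
    obtain ⟨-, hvw, hwu⟩ := mem_filter.1 hw
    obtain ⟨e, het, heA⟩ := Set.not_disjoint_iff.1 (hA (u, v, w) ⟨huv, hvw, hwu⟩)
    rcases het with rfl | rfl | rfl
    · exact absurd heA huvA
    · exact mem_union_left _ (mem_image.2 ⟨_, mem_filter.2 ⟨heA, rfl⟩, rfl⟩)
    · exact mem_union_right _ (mem_image.2 ⟨_, mem_filter.2 ⟨heA, rfl⟩, rfl⟩)
  exact (card_le_card hcover).trans <| (card_union_le _ _).trans <|
    add_le_add card_image_le card_image_le

theorem IsADTFamily.insert [DecidableEq V] {t : V × V × V} (hF : IsADTFamily E F)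
    (ht : IsTriangle E t) (hdisj : ∀ s ∈ F, Disjoint (triArcs t) (triArcs s)) :
    IsADTFamily E (insert t F) := by
  refine ⟨forall_mem_insert _ _ _ |>.2 ⟨ht, hF.1⟩, fun r hr s hs hrs => ?_⟩
  rcases mem_insert.1 hr with rfl | hrF <;> rcases mem_insert.1 hs with rfl | hsF
  · exact absurd rfl hrs
  · exact hdisj s hsF
  · exact (hdisj r hrF).symm
  · exact hF.2 r hrF s hsF hrs

section ADT

variable [Finite V]

theorem bddAbove_card_isADTFamily :
    BddAbove {n | ∃ F : Finset (V × V × V), IsADTFamily E F ∧ #F = n} := by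
  have := Fintype.ofFinite V
  refine ⟨Fintype.card (V × V × V), ?_⟩
  rintro _ ⟨F, -, rfl⟩
  exact card_le_univ F

theorem IsADTFamily.card_le_ADT (hF : IsADTFamily E F) : #F ≤ ADT E :=
  le_csSup bddAbove_card_isADTFamily ⟨F, hF, rfl⟩

variable (E) in
theorem exists_isADTFamily_card_eq_ADT :
    ∃ F : Finset (V × V × V), IsADTFamily E F ∧ #F = ADT E :=
  Nat.sSup_mem (s := {n | ∃ F : Finset (V × V × V), IsADTFamily E F ∧ #F = n})
    ⟨0, ∅, ⟨by simp, by simp⟩, card_empty⟩ bddAbove_card_isADTFamily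

variable (E) in
theorem exists_isTriangleTransversal_card_le :
    ∃ A : Finset (V × V), IsTriangleTransversal E A ∧ #A ≤ 3 * ADT E := by
  classical
  obtain ⟨F, hF, hcard⟩ := exists_isADTFamily_card_eq_ADT E
  let arcs (t : V × V × V) : Finset (V × V) := {(t.1, t.2.1), (t.2.1, t.2.2), (t.2.2, t.1)}
  have coe_arcs (t : V × V × V) : (arcs t : Set (V × V)) = triArcs t := by simp [arcs, triArcs]
  refine ⟨F.biUnion arcs, fun t ht hdisj => ?_, ?_⟩
  · have hdisjF : ∀ s ∈ F, Disjoint (triArcs t) (triArcs s) := fun s hs =>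
      hdisj.mono_right (coe_arcs s ▸ coe_subset.2 (subset_biUnion_of_mem arcs hs))
    have htF : t ∉ F := fun h =>
      Set.disjoint_left.1 (hdisjF t h) (Set.mem_insert _ _) (Set.mem_insert _ _)
    have := (hF.insert ht hdisjF).card_le_ADT
    rw [card_insert_of_notMem htF] at this
    omega
  · rw [← hcard, mul_comm]
    exact card_biUnion_le_card_mul _ _ _ fun _ _ => card_le_three

end ADT

section Bucket

variable [Fintype V]

theorem indeg_eq_card [DecidableRel E] (v : V) : indeg E v = #{u | E u v} := by
  rw [indeg, ← Set.ncard_coe_finset, coe_filter_univ]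

theorem IsTournament.card_midpoints_lt_of_indeg_le [DecidableRel E] (hT : IsTournament E)
    (huv : E u v) (hle : indeg E v ≤ indeg E u) :
    #(midpoints E univ u v) < #(midpoints E univ v u) := by
  classical
  let inNbrs (x : V) : Finset V := {w | E w x}
  have hle' : #(inNbrs v) ≤ #(inNbrs u) := by simpa only [indeg_eq_card] using hle
  have hu : u ∉ midpoints E univ u v := by simp [midpoints, hT.1]
  calc #(midpoints E univ u v)
      < #(insert u (midpoints E univ u v)) := card_lt_card (ssubset_insert hu)
    _ ≤ #(inNbrs v \ inNbrs u) := card_le_card (insert_subset ?_ fun w => ?_)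
    _ ≤ #(inNbrs u \ inNbrs v) := card_sdiff_le_card_sdiff_iff.2 hle'
    _ ≤ #(midpoints E univ v u) := card_le_card fun w => ?_
  · simp [inNbrs, huv, hT.1]
  · simp only [midpoints, inNbrs, mem_filter, mem_univ, true_and, mem_sdiff]
    exact fun h => ⟨h.2, hT.asymm h.1⟩
  · simp only [midpoints, inNbrs, mem_filter, mem_univ, true_and, mem_sdiff]
    have hne : E w u → w ≠ v := fun hwu h => hT.asymm huv (h ▸ hwu)
    exact fun h => ⟨(hT.not_arc_iff (hne h.1)).1 h.2, h.1⟩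

theorem IsTournament.card_midpoints_succ_le_charge [DecidableRel E] [DecidableEq V]
    (hT : IsTournament E) (hA : IsTriangleTransversal E A) (huv : E u v)
    (hle : indeg E v ≤ indeg E u) :
    #(midpoints E B u v) + 1 ≤ #{e ∈ A | e.1 = v} + #{e ∈ A | e.2 = u} +
      if (u, v) ∈ A then #(midpoints E B u v) + 1 else 0 := by
  split_ifs with huvA
  · exact Nat.le_add_left _ _
  · have hsub : midpoints E B u v ⊆ midpoints E univ u v := filter_subset_filter _ (subset_univ B)
    have := hT.card_midpoints_lt_of_indeg_le huv hle
    exact ((card_le_card hsub).trans_lt this).trans_le (hA.card_midpoints_le huv huvA)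

theorem IsTournament.sum_card_midpoints_succ_le [DecidableRel E] (hT : IsTournament E)
    (hA : IsTriangleTransversal E A) (hB : ∀ u ∈ B, ∀ v ∈ B, indeg E u = indeg E v) :
    ∑ p ∈ arcsIn E B, (#(midpoints E B p.1 p.2) + 1) ≤ #A * (2 * (#B - 1)) := by
  classical
  calc ∑ p ∈ arcsIn E B, (#(midpoints E B p.1 p.2) + 1)
      ≤ ∑ p ∈ arcsIn E B, (#{e ∈ A | e.1 = p.2} + #{e ∈ A | e.2 = p.1} +
          if p ∈ A then #(midpoints E B p.1 p.2) + 1 else 0) := sum_le_sum fun p hp => by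
        obtain ⟨⟨hp₁, hp₂⟩, hE⟩ := mem_arcsIn.1 hp
        exact hT.card_midpoints_succ_le_charge hA hE (hB _ hp₁ _ hp₂).ge
    _ = ∑ e ∈ A, (#{p ∈ arcsIn E B | e.1 = p.2} + #{p ∈ arcsIn E B | e.2 = p.1} +
          if e ∈ arcsIn E B then #(midpoints E B e.1 e.2) + 1 else 0) := by
        simp only [sum_add_distrib (M := ℕ), sum_ite_mem, inter_comm A]
        congr 2
        · exact sum_card_bipartiteAbove_eq_sum_card_bipartiteBelow fun p e : V × V => e.1 = p.2
        · exact sum_card_bipartiteAbove_eq_sum_card_bipartiteBelow fun p e : V × V => e.2 = p.1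
    _ ≤ #A * (2 * (#B - 1)) := by
        refine sum_le_card_nsmul _ _ _ fun e _ => ?_
        have hhead := card_filter_fst_arcsIn_le (B := B) hT.1 e.2
        have htail := hT.card_filter_snd_arcsIn_add_le (B := B) e
        omega

theorem IsTournament.card_sq_le_of_indeg_eq (hT : IsTournament E)
    (hA : IsTriangleTransversal E A) (hB : ∀ u ∈ B, ∀ v ∈ B, indeg E u = indeg E v) :
    #B ^ 2 ≤ 16 * #A + 1 := by
  classical
  rcases Nat.lt_or_ge #B 2 with hsmall | hlarge
  · interval_cases #B <;> omega
  obtain ⟨k, hk⟩ := Nat.exists_eq_add_of_le' hlarge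
  have hlower := hT.card_pow_three_le_sum_midpoints B
  have hupper := hT.sum_card_midpoints_succ_le hA hB
  rw [hk] at hlower hupper ⊢
  rw [Nat.add_succ_sub_one] at hupper
  have hcancel : (k + 1) * ((k + 2) * (k + 3)) ≤ (k + 1) * (16 * #A) := by linarith
  linarith [Nat.le_of_mul_le_mul_left hcancel k.succ_pos]

theorem IsTournament.maxdb_sq_le (hT : IsTournament E) : maxdb E ^ 2 ≤ 48 * ADT E + 1 := by
  classical
  obtain ⟨A, hA, hcard⟩ := exists_isTriangleTransversal_card_le E
  rw [← Nat.le_sqrt', maxdb, Finset.sup_le_iff]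
  intro d _
  rw [Nat.le_sqrt', Set.ncard_eq_toFinset_card']
  have := hT.card_sq_le_of_indeg_eq hA (B := {v | indeg E v = d}.toFinset) fun u hu v hv => by
    rw [Set.mem_toFinset.1 hu, Set.mem_toFinset.1 hv]
  omega

end Bucket

end

/-- maxdb(T) ≤ 8(√(ADT(T) + 1) + 1). -/
theorem stmt6 [Fintype V] (E : V → V → Prop) (hT : IsTournament E) :
    (maxdb E : ℝ) ≤ 8 * (Real.sqrt ((ADT E : ℝ) + 1) + 1) := by
  have hsq : (maxdb E : ℝ) ^ 2 ≤ 8 ^ 2 * (ADT E + 1) := by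
    exact_mod_cast hT.maxdb_sq_le.trans (by omega)
  calc (maxdb E : ℝ) ≤ Real.sqrt (8 ^ 2 * (ADT E + 1)) := Real.le_sqrt_of_sq_le hsq
    _ = 8 * Real.sqrt (ADT E + 1) := by
      rw [Real.sqrt_mul (by norm_num), Real.sqrt_sq (by norm_num)]
    _ ≤ 8 * (Real.sqrt (ADT E + 1) + 1) := by linarith
end

section
/- Let T be a tournament on n vertices, k ∈ ℕ, let LBack be the set of all k-long back arcs of T (back arcs uv with |d_T(u) − d_T(v)| ≥ k), and let Empty = {d ∈ {0,…,n−1} : DB_T[d] = ∅}. Then |Empty| ≤ FVST(T) · (2k + |LBack| + 2·FVST(T) + 5). -/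
variable {V : Type*}

/-!
Outside a feedback vertex set `F` the arcs form a linear order `v 0, v 1, …`, and
`indeg (v i) = i + #(in-neighbours of v i in F)`. An in-degree that is not attained and is neither
among the `|F|` smallest nor among the `|F|` largest ones is jumped over between some `v i` and
`v (i + 1)`. A jump over `j` values needs at least `j` vertices `x ∈ F` with an arc to `v (i + 1)`
but none to `v i`. For a fixed `x` this happens at few `i`: either `i` is within `k + |F|` of
`indeg x`, or one of the arcs `(x, v (i + 1))`, `(v i, x)` is a `k`-long back arc.
-/

/-- A semicomplete digraph: distinct vertices are joined by at least one arc. Loops and pairs of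
opposite arcs are allowed. -/
def IsSemicomplete (E : V → V → Prop) : Prop :=
  Pairwise fun u v => E u v ∨ E v u

/-- The set `LBack` of `k`-long back arcs. -/
def longBackArcs [Fintype V] (E : V → V → Prop) (k : ℕ) : Set (V × V) :=
  {p : V × V | p ∈ backArcs E ∧ kLong E k p}

/-- `v 0, …, v (m - 1)` are the first `m` vertices of a topological ordering of the digraph with
`F` removed; the values of `v` from `m` on are arbitrary. -/
structure IsTopologicalEnum [Fintype V] (E : V → V → Prop) (F : Finset V) (m : ℕ) (v : ℕ → V) :
    Prop where
  notMem : ∀ i < m, v i ∉ F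
  indegOn_compl : ∀ i < m, indegOn E (↑F)ᶜ (v i) = i

/-- Between positions `i` and `i + 1` the sequence `v` enters the out-neighbourhood of `x`. -/
def EntersAt (E : V → V → Prop) (v : ℕ → V) (i : ℕ) (x : V) : Prop :=
  ¬ E x (v i) ∧ E x (v (i + 1))

theorem exists_lt_and_mem_Ioo_succ {α : Type*} [LinearOrder α] {D : ℕ → α} {d : α} {m : ℕ}
    (hne : ∀ i, D i ≠ d) (h0 : D 0 < d) (hm : d < D m) :
    ∃ i < m, d ∈ Set.Ioo (D i) (D (i + 1)) := by
  induction m with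
  | zero => exact absurd h0 hm.asymm
  | succ m ih =>
    rcases (hne m).lt_or_gt with hlt | hgt
    · exact ⟨m, m.lt_succ_self, hlt, hm⟩
    · obtain ⟨i, hi, hd⟩ := ih hgt
      exact ⟨i, hi.trans m.lt_succ_self, hd⟩

theorem IsTournament.isSemicomplete {E : V → V → Prop} (hT : IsTournament E) :
    IsSemicomplete E :=
  fun u v huv => or_iff_not_imp_right.2 (hT.2 u v huv).2

section FeedbackVertexSet

variable {E : V → V → Prop} {F : Finset V}

theorem IsFVS.irrefl (hF : IsFVS E F) {u : V} (hu : u ∉ F) : ¬ E u u :=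
  fun h => hF u (.single ⟨h, hu, hu⟩)

theorem IsFVS.trans (hF : IsFVS E F) (hE : IsSemicomplete E) {u v w : V} (hu : u ∉ F)
    (hv : v ∉ F) (hw : w ∉ F) (huv : E u v) (hvw : E v w) : E u w := by
  have path : Relation.TransGen (fun a b => E a b ∧ a ∉ F ∧ b ∉ F) u w :=
    .tail (.single ⟨huv, hu, hv⟩) ⟨hvw, hv, hw⟩
  have huw : u ≠ w := by
    rintro rfl
    exact hF u path
  exact (hE huw).resolve_right fun hwu => hF u (path.tail ⟨hwu, hw, hu⟩)

variable [Fintype V]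

theorem exists_isFVS_card_eq_FVST (E : V → V → Prop) :
    ∃ F : Finset V, IsFVS E F ∧ F.card = FVST E := by
  have isFVS_univ : IsFVS E Finset.univ := fun v hv => by
    obtain ⟨w, hvw, -⟩ := Relation.TransGen.head'_iff.1 hv
    exact hvw.2.1 (Finset.mem_univ v)
  exact Nat.sInf_mem (s := {n | ∃ F : Finset V, IsFVS E F ∧ F.card = n}) ⟨_, _, isFVS_univ, rfl⟩

theorem indegOn_add_indegOn_compl (E : V → V → Prop) (X : Set V) (v : V) :
    indegOn E X v + indegOn E Xᶜ v = indeg E v := by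
  rw [indeg, ← Set.ncard_inter_add_ncard_sdiff_eq_ncard {u | E u v} X, indegOn, indegOn]
  congr 2 <;> ext u <;> exact and_comm

open scoped Classical in
theorem indegOn_coe (E : V → V → Prop) (F : Finset V) (v : V) :
    indegOn E F v = (F.filter fun u => E u v).card := by
  rw [indegOn, ← Set.ncard_coe_finset, Finset.coe_filter]
  rfl

theorem IsFVS.indegOn_compl_lt (hF : IsFVS E F) (hE : IsSemicomplete E) {u v : V} (hu : u ∉ F)
    (hv : v ∉ F) (huv : E u v) : indegOn E (↑F)ᶜ u < indegOn E (↑F)ᶜ v := by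
  refine Set.ncard_lt_ncard (Set.ssubset_iff_exists.2 ⟨?_, u, ⟨hu, huv⟩, ?_⟩)
  · exact fun w hw => ⟨hw.1, hF.trans hE hw.1 hu hv hw.2 huv⟩
  · exact fun h => hF.irrefl hu h.2

theorem IsFVS.injOn_indegOn_compl (hF : IsFVS E F) (hE : IsSemicomplete E) :
    Set.InjOn (indegOn E (↑F)ᶜ) (↑F)ᶜ := by
  intro u hu v hv heq
  by_contra hne
  rcases hE hne with huv | hvu
  · exact (hF.indegOn_compl_lt hE hu hv huv).ne heq
  · exact (hF.indegOn_compl_lt hE hv hu hvu).ne' heq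

theorem IsFVS.mapsTo_indegOn_compl (hF : IsFVS E F) :
    Set.MapsTo (indegOn E (↑F)ᶜ) (↑F)ᶜ (Set.Iio (↑F : Set V)ᶜ.ncard) := fun u hu =>
  Set.ncard_lt_ncard (Set.ssubset_iff_exists.2 ⟨fun _ hw => hw.1, u, hu, fun h => hF.irrefl hu h.2⟩)

theorem IsFVS.exists_isTopologicalEnum [Nonempty V] (hF : IsFVS E F) (hE : IsSemicomplete E) :
    ∃ v, IsTopologicalEnum E F (↑F : Set V)ᶜ.ncard v := by
  have surj : Set.SurjOn (indegOn E (↑F)ᶜ) (↑F)ᶜ (Set.Iio (↑F : Set V)ᶜ.ncard) := by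
    refine (Set.eq_of_subset_of_ncard_le hF.mapsTo_indegOn_compl.image_subset ?_).ge
    rw [(hF.injOn_indegOn_compl hE).ncard_image, Set.ncard_Iio_nat]
  exact ⟨Function.invFunOn (indegOn E (↑F)ᶜ) (↑F)ᶜ,
    fun i hi => Function.invFunOn_mem (surj hi), fun i hi => Function.invFunOn_eq (surj hi)⟩

end FeedbackVertexSet

namespace IsTopologicalEnum

variable [Fintype V] {E : V → V → Prop} {F : Finset V} {m : ℕ} {v : ℕ → V}

theorem indeg_eq (hv : IsTopologicalEnum E F m v) {i : ℕ} (hi : i < m) :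
    indeg E (v i) = indegOn E F (v i) + i := by
  rw [← indegOn_add_indegOn_compl E F, hv.indegOn_compl i hi]

theorem le_indeg (hv : IsTopologicalEnum E F m v) {i : ℕ} (hi : i < m) : i ≤ indeg E (v i) :=
  hv.indeg_eq hi ▸ Nat.le_add_left ..

theorem indeg_le (hv : IsTopologicalEnum E F m v) {i : ℕ} (hi : i < m) :
    indeg E (v i) ≤ F.card + i := by
  classical
  rw [hv.indeg_eq hi, indegOn_coe]
  gcongr
  exact Finset.filter_subset _ _

theorem injOn (hv : IsTopologicalEnum E F m v) : Set.InjOn v (Set.Iio m) :=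
  fun i hi j hj hij => by rw [← hv.indegOn_compl i hi, hij, hv.indegOn_compl j hj]

open scoped Classical in
theorem card_Ioo_indeg_succ_le (hv : IsTopologicalEnum E F m v) {i : ℕ} (hi : i + 1 < m) :
    (Finset.Ioo (indeg E (v i)) (indeg E (v (i + 1)))).card ≤
      (F.filter (EntersAt E v i)).card := by
  have hsub : F.filter (fun x => E x (v (i + 1))) ⊆
      F.filter (fun x => E x (v i)) ∪ F.filter (EntersAt E v i) := by
    intro x hx
    simp only [EntersAt, Finset.mem_filter, Finset.mem_union] at hx ⊢
    tauto
  have hcard := (Finset.card_le_card hsub).trans (Finset.card_union_le _ _)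
  rw [Nat.card_Ioo, hv.indeg_eq hi, hv.indeg_eq (i.lt_succ_self.trans hi), indegOn_coe,
    indegOn_coe]
  omega

theorem card_filter_indeg_near_le (hv : IsTopologicalEnum E F m v) (k d : ℕ) :
    ((Finset.range (m - 1)).filter fun i =>
      d < indeg E (v (i + 1)) + k ∧ indeg E (v i) < d + k).card ≤ 2 * k + F.card := by
  have hsub : ((Finset.range (m - 1)).filter fun i =>
      d < indeg E (v (i + 1)) + k ∧ indeg E (v i) < d + k) ⊆
        Finset.Ico (d - k - F.card) (d + k) := by
    intro i hi
    simp only [Finset.mem_filter, Finset.mem_range, Finset.mem_Ico] at hi ⊢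
    have lower := hv.le_indeg (i := i) (by omega)
    have upper := hv.indeg_le (i := i + 1) (by omega)
    omega
  refine (Finset.card_le_card hsub).trans ?_
  rw [Nat.card_Ico]
  omega

theorem exists_mem_longBackArcs (hv : IsTopologicalEnum E F m v) (hE : IsSemicomplete E) {k i : ℕ}
    {x : V} (hx : x ∈ F) (hi : i < m) (henter : EntersAt E v i x)
    (hfar : ¬ (indeg E x < indeg E (v (i + 1)) + k ∧ indeg E (v i) < indeg E x + k)) :
    ∃ p ∈ longBackArcs E k, p = (x, v (i + 1)) ∨ p = (v i, x) := by
  have mem_of_add_le {a b : V} (hab : E a b) (hle : indeg E b + k ≤ indeg E a) :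
      (a, b) ∈ longBackArcs E k :=
    ⟨⟨hab, by dsimp only; omega⟩, le_abs.2 (.inl (by dsimp only; omega))⟩
  rcases not_and_or.1 hfar with hlow | hhigh
  · exact ⟨_, mem_of_add_le henter.2 (not_lt.1 hlow), .inl rfl⟩
  · have hne : x ≠ v i := ne_of_mem_of_not_mem hx (hv.notMem i hi)
    exact ⟨_, mem_of_add_le ((hE hne).resolve_left henter.1) (not_lt.1 hhigh), .inr rfl⟩

open scoped Classical in
theorem card_filter_entersAt_far_le (hv : IsTopologicalEnum E F m v) (hE : IsSemicomplete E)
    (k : ℕ) {x : V} (hx : x ∈ F) :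
    ((Finset.range (m - 1)).filter fun i => EntersAt E v i x ∧
      ¬ (indeg E x < indeg E (v (i + 1)) + k ∧ indeg E (v i) < indeg E x + k)).card ≤
        (longBackArcs E k).ncard := by
  rw [Set.ncard_eq_toFinset_card']
  refine Finset.card_le_card_of_forall_subsingleton
    (fun i p => p = (x, v (i + 1)) ∨ p = (v i, x)) (fun i hi => ?_) ?_
  · obtain ⟨him, henter, hfar⟩ := Finset.mem_filter.1 hi
    rw [Finset.mem_range] at him
    simpa only [Set.mem_toFinset] using
      hv.exists_mem_longBackArcs hE hx (by omega) henter hfar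
  · rintro p - i ⟨hi, hip⟩ j ⟨hj, hjp⟩
    simp only [Finset.mem_filter, Finset.mem_range] at hi hj
    have ne_v (l : ℕ) (hl : l < m) : x ≠ v l := ne_of_mem_of_not_mem hx (hv.notMem l hl)
    rcases hip with rfl | rfl <;> rcases hjp with heq | heq <;> rw [Prod.mk.injEq] at heq
    · have succ_eq : i + 1 = j + 1 :=
        hv.injOn (Set.mem_Iio.2 (by omega)) (Set.mem_Iio.2 (by omega)) heq.2
      exact Nat.succ_injective succ_eq
    · exact absurd heq.1 (ne_v j (by omega))
    · exact absurd heq.1.symm (ne_v i (by omega))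
    · exact hv.injOn (Set.mem_Iio.2 (by omega)) (Set.mem_Iio.2 (by omega)) heq.1

open scoped Classical in
theorem card_filter_entersAt_le (hv : IsTopologicalEnum E F m v) (hE : IsSemicomplete E) (k : ℕ)
    {x : V} (hx : x ∈ F) :
    ((Finset.range (m - 1)).filter (EntersAt E v · x)).card ≤
      2 * k + F.card + (longBackArcs E k).ncard := by
  rw [← Finset.card_filter_add_card_filter_not fun i =>
    indeg E x < indeg E (v (i + 1)) + k ∧ indeg E (v i) < indeg E x + k]
  gcongr
  · refine (Finset.card_le_card ?_).trans (hv.card_filter_indeg_near_le k (indeg E x))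
    exact Finset.filter_subset_filter _ (Finset.filter_subset _ _)
  · rw [Finset.filter_filter]
    exact hv.card_filter_entersAt_far_le hE k hx

theorem card_biUnion_Ioo_indeg_le (hv : IsTopologicalEnum E F m v) (hE : IsSemicomplete E)
    (k : ℕ) :
    ((Finset.range (m - 1)).biUnion fun i =>
      Finset.Ioo (indeg E (v i)) (indeg E (v (i + 1)))).card ≤
        F.card * (2 * k + F.card + (longBackArcs E k).ncard) := by
  classical
  calc
    _ ≤ ∑ i ∈ Finset.range (m - 1),
          (Finset.Ioo (indeg E (v i)) (indeg E (v (i + 1)))).card := Finset.card_biUnion_le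
    _ ≤ ∑ i ∈ Finset.range (m - 1), (F.filter (EntersAt E v i)).card :=
      Finset.sum_le_sum fun i hi =>
        hv.card_Ioo_indeg_succ_le (Nat.add_lt_of_lt_sub (Finset.mem_range.1 hi))
    _ = ∑ x ∈ F, ((Finset.range (m - 1)).filter (EntersAt E v · x)).card :=
      Finset.sum_card_bipartiteAbove_eq_sum_card_bipartiteBelow _
    _ ≤ F.card * (2 * k + F.card + (longBackArcs E k).ncard) :=
      Finset.sum_le_card_nsmul _ _ _ fun x hx => hv.card_filter_entersAt_le hE k hx

theorem emptyBuckets_subset (hv : IsTopologicalEnum E F m v) :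
    emptyBuckets E ⊆ ↑(Finset.range F.card ∪ Finset.Ico m (Fintype.card V) ∪
      (Finset.range (m - 1)).biUnion fun i =>
        Finset.Ioo (indeg E (v i)) (indeg E (v (i + 1)))) := by
  rintro d ⟨hdn, hempty⟩
  have hne (i : ℕ) : indeg E (v i) ≠ d := Set.eq_empty_iff_forall_notMem.1 hempty (v i)
  simp only [Finset.coe_union, Set.mem_union, Finset.mem_coe, Finset.mem_range, Finset.mem_Ico,
    Finset.mem_biUnion, Finset.mem_Ioo]
  refine or_iff_not_imp_left.2 fun hmid => ?_
  have first := hv.indeg_le (i := 0) (by omega)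
  have last := hv.le_indeg (i := m - 1) (by omega)
  have ne_first := hne 0
  have ne_last := hne (m - 1)
  exact exists_lt_and_mem_Ioo_succ hne (by omega) (by omega)

end IsTopologicalEnum

theorem stmt15_general [Fintype V] {E : V → V → Prop} (hE : IsSemicomplete E) {F : Finset V}
    (hF : IsFVS E F) (k : ℕ) :
    (emptyBuckets E).ncard ≤ F.card * (2 * k + (longBackArcs E k).ncard + F.card + 2) := by
  rcases isEmpty_or_nonempty V with hV | hV
  · simp [emptyBuckets]
  obtain ⟨v, hv⟩ := hF.exists_isTopologicalEnum hE
  have card_add_card_compl : F.card + (↑F : Set V)ᶜ.ncard = Fintype.card V := by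
    rw [← Set.ncard_coe_finset, Set.ncard_add_ncard_compl, Nat.card_eq_fintype_card]
  have ends : (Finset.range F.card ∪
      Finset.Ico (↑F : Set V)ᶜ.ncard (Fintype.card V)).card ≤ F.card + F.card := by
    refine (Finset.card_union_le _ _).trans_eq ?_
    rw [Finset.card_range, Nat.card_Ico, ← card_add_card_compl, Nat.add_sub_cancel]
  calc
    _ ≤ _ := Set.ncard_le_ncard hv.emptyBuckets_subset (Finset.finite_toSet _)
    _ ≤ F.card + F.card + F.card * (2 * k + F.card + (longBackArcs E k).ncard) := by
      rw [Set.ncard_coe_finset]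
      refine (Finset.card_union_le _ _).trans ?_
      gcongr
      exact hv.card_biUnion_Ioo_indeg_le hE k
    _ = F.card * (2 * k + (longBackArcs E k).ncard + F.card + 2) := by ring

/-- |Empty| ≤ FVST(T)·(2k + |LBack| + 2·FVST(T) + 5), where LBack is the set of
k-long back arcs of T. -/
theorem stmt15 [Fintype V] (E : V → V → Prop) (hT : IsTournament E) (k : ℕ) :
    Set.ncard (emptyBuckets E) ≤
      FVST E *
        (2 * k + Set.ncard {p : V × V | p ∈ backArcs E ∧ kLong E k p} +
          2 * FVST E + 5) := by
  obtain ⟨F, hF, hcard⟩ := exists_isFVS_card_eq_FVST E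
  exact hcard ▸ (stmt15_general hT.isSemicomplete hF k).trans
    (by rw [longBackArcs]; gcongr <;> omega)
end
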